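/- Let α > 0 and let f ∈ C(Ḡ, C^{1+α}(I²)) (f continuous on Ḡ×I², C¹ in (E',E) with α-Hölder first derivatives, uniformly in x). Assume moreover that for each x ∈ Ḡ the function E' ↦ f(x,E_m,E')/(E_m−E') is integrable on I. Then ∫_I ( p.f.∫_E^{E_m} f(x,E',E)/(E'−E)² dE' ) dE = ∫_I ( p.f.∫_{E₀}^{E'} (∂f/∂E')(x,E',E)/(E'−E) dE ) dE' + ∫_I (∂f/∂E')(x,E',E') dE' − ∫_I f(x,E_m,E')/(E_m−E') dE'. -/

import Mathlib

open MeasureTheory Filter Set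
open scoped Topology

noncomputable section

abbrev E3 : Type := EuclideanSpace ℝ (Fin 3)

/-- Hadamard finite part of order 1 with lower limit `a`. -/
def HasPF1Lower (g : ℝ → ℝ) (a x L : ℝ) : Prop :=
  Tendsto (fun ε : ℝ => (∫ t in a..(x - ε), g t / (x - t)) + g x * Real.log ε)
    (𝓝[>] (0 : ℝ)) (𝓝 L)

/-- Hadamard finite part of order 2 with upper limit `b`, `d` being the right derivative
`g'(x⁺)`. -/
def HasPF2Upper (g : ℝ → ℝ) (d x b L : ℝ) : Prop :=
  Tendsto (fun ε : ℝ => (∫ t in (x + ε)..b, g t / (t - x) ^ 2) + d * Real.log ε - g x / ε)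
    (𝓝[>] (0 : ℝ)) (𝓝 L)

/-!
Write `h = ∂f/∂E'`. Integrating by parts turns the finite part of order 2 of `f(·, E)` into the
finite part of order 1 of `h(·, E)` plus `h(E, E) − f(E_m, E)/(E_m − E)`, so the formula says that
the integral of `h(E', E)/(E' − E)` over the triangle `E < E'` may be iterated in either order, in
the sense of finite parts. The two iterations subtract different diagonal values: the inner finite
parts are the integrals of `(h(E', E) − h(E, E))/(E' − E)` and `(h(E', E) − h(E', E'))/(E' − E)`,
plus logarithms. Both quotients are `O((E' − E)^(α − 1))`, so Fubini applies to each, and their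
difference is the slope of `D(E) = h(E, E)`. Replacing the denominator by `E' − E + ε`, the
integrals of `D(E')` and `D(E)` over the triangle both diverge like `−log ε ∫ D`; these divergences
cancel in the difference, and what remains as `ε → 0` is exactly the difference of the logarithms.
-/

section Regularization

variable {X : Type*} [MeasurableSpace X] {μ : Measure X} {φ u : X → ℝ}

theorem tendsto_integral_div_add_nhdsGT_zero (hu : ∀ᵐ x ∂μ, 0 < u x)
    (hum : AEStronglyMeasurable u μ) (hφu : Integrable (fun x => φ x / u x) μ) :
    Tendsto (fun ε => ∫ x, φ x / (u x + ε) ∂μ) (𝓝[>] 0) (𝓝 (∫ x, φ x / u x ∂μ)) := by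
  refine tendsto_integral_filter_of_dominated_convergence (fun x => ‖φ x / u x‖) ?_ ?_
    hφu.norm ?_
  · refine Eventually.of_forall fun ε => ?_
    have hratio : AEStronglyMeasurable (fun x => u x / (u x + ε)) μ :=
      (hum.aemeasurable.div (hum.aemeasurable.add_const ε)).aestronglyMeasurable
    refine (hφu.aestronglyMeasurable.mul hratio).congr (hu.mono fun x hx => ?_)
    exact div_mul_div_cancel₀ hx.ne'
  · filter_upwards [self_mem_nhdsWithin] with ε (hε : 0 < ε)
    filter_upwards [hu] with x hx
    rw [norm_div, norm_div, Real.norm_of_nonneg hx.le, Real.norm_of_nonneg (add_pos hx hε).le]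
    gcongr
    linarith
  · filter_upwards [hu] with x hx
    have hlim : Tendsto (fun ε => φ x / (u x + ε)) (𝓝 0) (𝓝 (φ x / (u x + 0))) :=
      tendsto_const_nhds.div (tendsto_const_nhds.add tendsto_id) (by simpa using hx.ne')
    simpa only [add_zero] using hlim.mono_left nhdsWithin_le_nhds

theorem tendsto_integral_mul_log_add_nhdsGT_zero {M : ℝ} (hu : ∀ᵐ x ∂μ, u x ∈ Ioc 0 M)
    (hum : AEStronglyMeasurable u μ) (hφ : Integrable φ μ)
    (hφu : Integrable (fun x => φ x * Real.log (u x)) μ) :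
    Tendsto (fun ε => ∫ x, φ x * Real.log (u x + ε) ∂μ) (𝓝[>] 0)
      (𝓝 (∫ x, φ x * Real.log (u x) ∂μ)) := by
  refine tendsto_integral_filter_of_dominated_convergence
    (fun x => ‖φ x * Real.log (u x)‖ + ‖φ x * Real.log (M + 1)‖) ?_ ?_
    (hφu.norm.add (hφ.mul_const _).norm) ?_
  · refine Eventually.of_forall fun ε => hφ.aestronglyMeasurable.mul ?_
    exact (Real.measurable_log.comp_aemeasurable
      (hum.aemeasurable.add_const ε)).aestronglyMeasurable
  · filter_upwards [Ioc_mem_nhdsGT zero_lt_one] with ε hε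
    filter_upwards [hu] with x hx
    simp only [norm_mul, ← mul_add, Real.norm_eq_abs]
    gcongr
    have hlower : Real.log (u x) ≤ Real.log (u x + ε) :=
      Real.log_le_log hx.1 (by linarith [hε.1])
    have hupper : Real.log (u x + ε) ≤ Real.log (M + 1) :=
      Real.log_le_log (by linarith [hx.1, hε.1]) (by linarith [hx.2, hε.2])
    exact (abs_le_max_abs_abs hlower hupper).trans
      (max_le_add_of_nonneg (abs_nonneg _) (abs_nonneg _))
  · filter_upwards [hu] with x hx
    have hlim : Tendsto (fun ε => φ x * Real.log (u x + ε)) (𝓝 0)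
        (𝓝 (φ x * Real.log (u x + 0))) :=
      ((tendsto_const_nhds.add tendsto_id).log (by simpa using hx.1.ne')).const_mul _
    simpa only [add_zero] using hlim.mono_left nhdsWithin_le_nhds

end Regularization

section Triangle

/-- The open triangle `a < t < s < b` of points `(s, t)` below the diagonal: the domain over which
the order of the two singular integrations is exchanged. -/
def openTriangle (a b : ℝ) : Set (ℝ × ℝ) :=
  {p | a < p.2 ∧ p.2 < p.1 ∧ p.1 < b}

variable {a b : ℝ}

theorem measurableSet_openTriangle : MeasurableSet (openTriangle a b) :=
  (measurableSet_lt measurable_const measurable_snd).inter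
    ((measurableSet_lt measurable_snd measurable_fst).inter
      (measurableSet_lt measurable_fst measurable_const))

theorem openTriangle_subset_Icc_prod_Icc : openTriangle a b ⊆ Icc a b ×ˢ Icc a b :=
  fun _ ⟨h₁, h₂, h₃⟩ => ⟨⟨(h₁.trans h₂).le, h₃.le⟩, ⟨h₁.le, (h₂.trans h₃).le⟩⟩

variable {F : ℝ × ℝ → ℝ}

theorem integral_indicator_openTriangle_fst (s : ℝ) :
    ∫ t, (openTriangle a b).indicator F (s, t) =
      (Ioo a b).indicator (fun s => ∫ t in a..s, F (s, t)) s := by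
  by_cases hs : s ∈ Ioo a b
  · have hslice : (fun t => (openTriangle a b).indicator F (s, t)) =
        (Ioo a s).indicator fun t => F (s, t) := by
      ext t
      simp only [indicator_apply, openTriangle, mem_ofPred_eq, mem_Ioo, hs.2, and_true]
    rw [hslice, integral_indicator measurableSet_Ioo, indicator_of_mem hs,
      intervalIntegral.integral_of_le hs.1.le, integral_Ioc_eq_integral_Ioo]
  · have hempty (t : ℝ) : (s, t) ∉ openTriangle a b := fun ⟨h₁, h₂, h₃⟩ => hs ⟨h₁.trans h₂, h₃⟩
    simp only [indicator_of_notMem (hempty _), indicator_of_notMem hs, integral_zero]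

theorem integral_indicator_openTriangle_snd (t : ℝ) :
    ∫ s, (openTriangle a b).indicator F (s, t) =
      (Ioo a b).indicator (fun t => ∫ s in t..b, F (s, t)) t := by
  by_cases ht : t ∈ Ioo a b
  · have hslice : (fun s => (openTriangle a b).indicator F (s, t)) =
        (Ioo t b).indicator fun s => F (s, t) := by
      ext s
      simp only [indicator_apply, openTriangle, mem_ofPred_eq, mem_Ioo, ht.1, true_and]
    rw [hslice, integral_indicator measurableSet_Ioo, indicator_of_mem ht,
      intervalIntegral.integral_of_le ht.2.le, integral_Ioc_eq_integral_Ioo]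
  · have hempty (s : ℝ) : (s, t) ∉ openTriangle a b := fun ⟨h₁, h₂, h₃⟩ => ht ⟨h₁, h₂.trans h₃⟩
    simp only [indicator_of_notMem (hempty _), indicator_of_notMem ht, integral_zero]

theorem intervalIntegrable_integral_openTriangle_fst (hab : a ≤ b)
    (hF : IntegrableOn F (openTriangle a b)) :
    IntervalIntegrable (fun s => ∫ t in a..s, F (s, t)) volume a b := by
  have h := (hF.integrable_indicator measurableSet_openTriangle).integral_prod_left
  simp only [integral_indicator_openTriangle_fst] at h
  exact (intervalIntegrable_iff_integrableOn_Ioo_of_le hab).2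
    ((integrable_indicator_iff measurableSet_Ioo).1 h)

theorem intervalIntegrable_integral_openTriangle_snd (hab : a ≤ b)
    (hF : IntegrableOn F (openTriangle a b)) :
    IntervalIntegrable (fun t => ∫ s in t..b, F (s, t)) volume a b := by
  have h := (hF.integrable_indicator measurableSet_openTriangle).integral_prod_right
  simp only [integral_indicator_openTriangle_snd] at h
  exact (intervalIntegrable_iff_integrableOn_Ioo_of_le hab).2
    ((integrable_indicator_iff measurableSet_Ioo).1 h)

theorem setIntegral_openTriangle_eq_integral_fst (hab : a ≤ b)
    (hF : IntegrableOn F (openTriangle a b)) :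
    ∫ p in openTriangle a b, F p = ∫ s in a..b, ∫ t in a..s, F (s, t) := by
  rw [← integral_indicator measurableSet_openTriangle, Measure.volume_eq_prod,
    integral_prod _ (hF.integrable_indicator measurableSet_openTriangle)]
  simp only [integral_indicator_openTriangle_fst]
  rw [integral_indicator measurableSet_Ioo, intervalIntegral.integral_of_le hab,
    integral_Ioc_eq_integral_Ioo]

theorem setIntegral_openTriangle_eq_integral_snd (hab : a ≤ b)
    (hF : IntegrableOn F (openTriangle a b)) :
    ∫ p in openTriangle a b, F p = ∫ t in a..b, ∫ s in t..b, F (s, t) := by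
  rw [← integral_indicator measurableSet_openTriangle, Measure.volume_eq_prod,
    integral_prod_symm _ (hF.integrable_indicator measurableSet_openTriangle)]
  simp only [integral_indicator_openTriangle_snd]
  rw [integral_indicator measurableSet_Ioo, intervalIntegral.integral_of_le hab,
    integral_Ioc_eq_integral_Ioo]

theorem integrableOn_openTriangle_comp_sub {k : ℝ → ℝ} (hk : IntegrableOn k (Ioo 0 (b - a))) :
    IntegrableOn (fun p => k (p.1 - p.2)) (openTriangle a b) := by
  have hprod : Integrable (fun q : ℝ × ℝ =>
      (Ioo 0 (b - a)).indicator k q.1 * (Ioo a b).indicator 1 q.2) :=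
    (hk.integrable_indicator measurableSet_Ioo).mul_prod
      ((integrableOn_const (C := (1 : ℝ)) measure_Ioo_lt_top.ne).integrable_indicator
        measurableSet_Ioo)
  have hshear : MeasurePreserving (fun p : ℝ × ℝ => (p.1 - p.2, p.2)) :=
    measurePreserving_sub_prod volume volume
  refine (hshear.integrable_comp_of_integrable hprod).integrableOn.congr_fun (fun p hp => ?_)
    measurableSet_openTriangle
  obtain ⟨h₁, h₂, h₃⟩ := hp
  have hsub : p.1 - p.2 ∈ Ioo 0 (b - a) := ⟨by linarith, by linarith⟩
  have hsnd : p.2 ∈ Ioo a b := ⟨h₁, h₂.trans h₃⟩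
  simp only [Function.comp_apply, indicator_of_mem hsub, indicator_of_mem hsnd, Pi.one_apply,
    mul_one]

end Triangle

section DiagonalSlope

variable {a b ε : ℝ} {D : ℝ → ℝ}

theorem integrableOn_openTriangle_div_sub_add {φ : ℝ × ℝ → ℝ} (hε : 0 < ε)
    (hφ : ContinuousOn φ (Icc a b ×ˢ Icc a b)) :
    IntegrableOn (fun p => φ p / (p.1 - p.2 + ε)) (openTriangle a b) := by
  have hcont : ContinuousOn (fun p => φ p / (|p.1 - p.2| + ε)) (Icc a b ×ˢ Icc a b) :=
    hφ.div (by fun_prop) fun p _ => by positivity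
  refine ((hcont.integrableOn_compact (isCompact_Icc.prod isCompact_Icc)).mono_set
    openTriangle_subset_Icc_prod_Icc).congr_fun (fun p hp => ?_) measurableSet_openTriangle
  simp only [abs_of_pos (sub_pos.2 hp.2.1)]

theorem integrableOn_openTriangle_fst_div (hε : 0 < ε) (hD : ContinuousOn D (Icc a b)) :
    IntegrableOn (fun p => D p.1 / (p.1 - p.2 + ε)) (openTriangle a b) :=
  integrableOn_openTriangle_div_sub_add hε (hD.comp continuousOn_fst fun _ hp => hp.1)

theorem integrableOn_openTriangle_snd_div (hε : 0 < ε) (hD : ContinuousOn D (Icc a b)) :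
    IntegrableOn (fun p => D p.2 / (p.1 - p.2 + ε)) (openTriangle a b) :=
  integrableOn_openTriangle_div_sub_add hε (hD.comp continuousOn_snd fun _ hp => hp.2)

theorem integral_inv_add {L : ℝ} (hε : 0 < ε) (hL : 0 ≤ L) :
    ∫ r in (0 : ℝ)..L, (r + ε)⁻¹ = Real.log (L + ε) - Real.log ε := by
  rw [intervalIntegral.integral_comp_add_right (fun r => r⁻¹), zero_add,
    integral_inv_of_pos hε (by positivity), Real.log_div (by positivity) hε.ne']

theorem setIntegral_openTriangle_fst_div (hab : a ≤ b) (hε : 0 < ε)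
    (hD : ContinuousOn D (Icc a b)) :
    ∫ p in openTriangle a b, D p.1 / (p.1 - p.2 + ε) =
      ∫ s in a..b, D s * (Real.log (s - a + ε) - Real.log ε) := by
  rw [setIntegral_openTriangle_eq_integral_fst hab
    (integrableOn_openTriangle_fst_div hε hD)]
  refine intervalIntegral.integral_congr fun s hs => ?_
  rw [uIcc_of_le hab] at hs
  simp only [div_eq_mul_inv, intervalIntegral.integral_const_mul]
  rw [intervalIntegral.integral_comp_sub_left (fun r => (r + ε)⁻¹), sub_self,
    integral_inv_add hε (sub_nonneg.2 hs.1)]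

theorem setIntegral_openTriangle_snd_div (hab : a ≤ b) (hε : 0 < ε)
    (hD : ContinuousOn D (Icc a b)) :
    ∫ p in openTriangle a b, D p.2 / (p.1 - p.2 + ε) =
      ∫ t in a..b, D t * (Real.log (b - t + ε) - Real.log ε) := by
  rw [setIntegral_openTriangle_eq_integral_snd hab
    (integrableOn_openTriangle_snd_div hε hD)]
  refine intervalIntegral.integral_congr fun t ht => ?_
  rw [uIcc_of_le hab] at ht
  simp only [div_eq_mul_inv, intervalIntegral.integral_const_mul]
  rw [intervalIntegral.integral_comp_sub_right (fun r => (r + ε)⁻¹), sub_self,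
    integral_inv_add hε (sub_nonneg.2 ht.2)]

theorem setIntegral_openTriangle_sub_div_add (hab : a ≤ b) (hε : 0 < ε)
    (hD : ContinuousOn D (Icc a b)) :
    ∫ p in openTriangle a b, (D p.1 - D p.2) / (p.1 - p.2 + ε) =
      (∫ s in a..b, D s * Real.log (s - a + ε)) - ∫ t in a..b, D t * Real.log (b - t + ε) := by
  have hint {u : ℝ → ℝ} (hu : Continuous u) (hpos : ∀ t ∈ Icc a b, 0 ≤ u t) :
      IntervalIntegrable (fun t => D t * Real.log (u t + ε)) volume a b := by
    refine ContinuousOn.intervalIntegrable (uIcc_of_le hab ▸ hD.mul ?_)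
    exact ContinuousOn.log (by fun_prop) fun t ht => (add_pos_of_nonneg_of_pos (hpos t ht) hε).ne'
  have hconst : IntervalIntegrable (fun t => D t * Real.log ε) volume a b :=
    (hD.mul continuousOn_const).intervalIntegrable_of_Icc hab
  simp only [sub_div]
  rw [integral_sub (integrableOn_openTriangle_fst_div hε hD)
      (integrableOn_openTriangle_snd_div hε hD), setIntegral_openTriangle_fst_div hab hε hD,
    setIntegral_openTriangle_snd_div hab hε hD]
  simp only [mul_sub]
  rw [intervalIntegral.integral_sub (hint (by fun_prop) fun t ht => sub_nonneg.2 ht.1) hconst,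
    intervalIntegral.integral_sub (hint (by fun_prop) fun t ht => sub_nonneg.2 ht.2) hconst,
    sub_sub_sub_cancel_right]

theorem tendsto_intervalIntegral_mul_log_add {u : ℝ → ℝ} {M : ℝ} (hab : a ≤ b)
    (hD : ContinuousOn D (Icc a b)) (hu : ∀ t ∈ Ioo a b, u t ∈ Ioc 0 M) (huc : Continuous u)
    (hlog : IntervalIntegrable (fun t => Real.log (u t)) volume a b) :
    Tendsto (fun ε => ∫ t in a..b, D t * Real.log (u t + ε)) (𝓝[>] 0)
      (𝓝 (∫ t in a..b, D t * Real.log (u t))) := by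
  simp only [intervalIntegral.integral_of_le hab, integral_Ioc_eq_integral_Ioo]
  exact tendsto_integral_mul_log_add_nhdsGT_zero (ae_restrict_of_forall_mem measurableSet_Ioo hu)
    huc.aestronglyMeasurable (hD.integrableOn_Icc.mono_set Ioo_subset_Icc_self)
    ((intervalIntegrable_iff_integrableOn_Ioo_of_le hab).1
      (hlog.continuousOn_mul (uIcc_of_le hab ▸ hD)))

theorem intervalIntegrable_log_sub_left (a b c : ℝ) :
    IntervalIntegrable (fun t => Real.log (t - c)) volume a b := by
  simpa using (intervalIntegral.intervalIntegrable_log' (a := a - c) (b := b - c)).comp_sub_right c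

theorem intervalIntegrable_log_sub_right (a b c : ℝ) :
    IntervalIntegrable (fun t => Real.log (c - t)) volume a b := by
  simpa using (intervalIntegral.intervalIntegrable_log' (a := c - a) (b := c - b)).comp_sub_left c

theorem setIntegral_openTriangle_slope (hab : a ≤ b) (hD : ContinuousOn D (Icc a b))
    (hslope : IntegrableOn (fun p => (D p.1 - D p.2) / (p.1 - p.2)) (openTriangle a b)) :
    ∫ p in openTriangle a b, (D p.1 - D p.2) / (p.1 - p.2) =
      (∫ s in a..b, D s * Real.log (s - a)) - ∫ t in a..b, D t * Real.log (b - t) := by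
  have hleft := tendsto_integral_div_add_nhdsGT_zero
    (ae_restrict_of_forall_mem measurableSet_openTriangle fun p hp => sub_pos.2 hp.2.1)
    (by fun_prop) hslope
  have hright := (tendsto_intervalIntegral_mul_log_add (u := fun s => s - a) (M := b - a) hab hD
      (fun s hs => ⟨sub_pos.2 hs.1, by linarith [hs.2]⟩) (by fun_prop)
      (intervalIntegrable_log_sub_left a b a)).sub
    (tendsto_intervalIntegral_mul_log_add (u := fun t => b - t) (M := b - a) hab hD
      (fun t ht => ⟨sub_pos.2 ht.2, by linarith [ht.1]⟩) (by fun_prop)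
      (intervalIntegrable_log_sub_right a b b))
  refine tendsto_nhds_unique (hleft.congr' ?_) hright
  filter_upwards [self_mem_nhdsWithin] with ε hε
  exact setIntegral_openTriangle_sub_div_add hab hε hD

end DiagonalSlope

section FinitePartValues

/-- The value of the finite part of `∫ g(t)/(x − t) dt` over `[a, x]` when the difference quotient
of `g` at `x` is integrable: subtracting `g x` removes the singularity, and `g x / (x - t)`
contributes only the logarithm. -/
def pf1Lower (g : ℝ → ℝ) (a x : ℝ) : ℝ :=
  (∫ t in a..x, (g t - g x) / (x - t)) + g x * Real.log (x - a)

/-- Hadamard finite part of order 1 with upper limit `b`: the mirror image of `HasPF1Lower`, and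
the finite part to which `HasPF2Upper` reduces by integration by parts. -/
def HasPF1Upper (g : ℝ → ℝ) (x b L : ℝ) : Prop :=
  Tendsto (fun ε : ℝ => (∫ t in (x + ε)..b, g t / (t - x)) + g x * Real.log ε)
    (𝓝[>] (0 : ℝ)) (𝓝 L)

/-- The mirror image of `pf1Lower`: the value of the finite part of `∫ g(t)/(t − x) dt` over
`[x, b]`. -/
def pf1Upper (g : ℝ → ℝ) (x b : ℝ) : ℝ :=
  (∫ t in x..b, (g t - g x) / (t - x)) + g x * Real.log (b - x)

variable {g : ℝ → ℝ} {a b x L : ℝ}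

theorem hasPF1Upper_iff_hasPF1Lower_comp_neg :
    HasPF1Upper g x b L ↔ HasPF1Lower (fun t => g (-t)) (-b) (-x) L := by
  have hreflect (ε : ℝ) :
      ∫ t in (-b)..(-x - ε), g (-t) / (-x - t) = ∫ t in (x + ε)..b, g t / (t - x) := by
    rw [← neg_add', ← intervalIntegral.integral_comp_neg]
    simp only [neg_neg, neg_sub_neg]
  simp only [HasPF1Upper, HasPF1Lower, hreflect, neg_neg]

theorem pf1Upper_eq_pf1Lower_comp_neg :
    pf1Upper g x b = pf1Lower (fun t => g (-t)) (-b) (-x) := by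
  simp only [pf1Upper, pf1Lower, neg_neg, neg_sub_neg, ← intervalIntegral.integral_comp_neg]

theorem integral_div_sub_add_mul_log_eq {ε : ℝ} (hε : 0 < ε) (hεx : ε < x - a)
    (hg : IntervalIntegrable (fun t => (g t - g x) / (x - t)) volume a (x - ε)) :
    (∫ t in a..(x - ε), g t / (x - t)) + g x * Real.log ε =
      (∫ t in a..(x - ε), (g t - g x) / (x - t)) + g x * Real.log (x - a) := by
  have hconst : IntervalIntegrable (fun t => g x / (x - t)) volume a (x - ε) := by
    refine ContinuousOn.intervalIntegrable (continuousOn_const.div (by fun_prop) fun t ht => ?_)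
    rw [uIcc_of_le (by linarith)] at ht
    linarith [ht.2]
  have hlog : ∫ t in a..(x - ε), g x / (x - t) = g x * (Real.log (x - a) - Real.log ε) := by
    simp only [div_eq_mul_inv, intervalIntegral.integral_const_mul]
    rw [intervalIntegral.integral_comp_sub_left (fun r => r⁻¹), sub_sub_cancel,
      integral_inv_of_pos hε (hε.trans hεx), Real.log_div (hε.trans hεx).ne' hε.ne']
  have hsplit := intervalIntegral.integral_add hg hconst
  simp only [← add_div, sub_add_cancel] at hsplit
  rw [hsplit, hlog]
  ring

theorem hasPF1Lower_pf1Lower (hax : a < x)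
    (hg : IntervalIntegrable (fun t => (g t - g x) / (x - t)) volume a x) :
    HasPF1Lower g a x (pf1Lower g a x) := by
  have hcont : ContinuousWithinAt (fun y => ∫ t in a..y, (g t - g x) / (x - t)) (uIcc a x) x :=
    intervalIntegral.continuousOn_primitive_interval' hg left_mem_uIcc x right_mem_uIcc
  have hshift : Tendsto (fun ε => x - ε) (𝓝[>] 0) (𝓝[uIcc a x] x) := by
    refine tendsto_nhdsWithin_iff.2 ⟨?_, ?_⟩
    · exact (Continuous.tendsto' (by fun_prop) 0 x (sub_zero x)).mono_left nhdsWithin_le_nhds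
    · filter_upwards [Ioo_mem_nhdsGT (sub_pos.2 hax)] with ε hε
      rw [uIcc_of_le hax.le]
      exact ⟨by linarith [hε.2], by linarith [hε.1]⟩
  refine ((hcont.tendsto.comp hshift).add_const (g x * Real.log (x - a))).congr' ?_
  filter_upwards [Ioo_mem_nhdsGT (sub_pos.2 hax)] with ε hε
  refine (integral_div_sub_add_mul_log_eq hε.1 hε.2 (hg.mono_set ?_)).symm
  rw [uIcc_of_le (by linarith [hε.2]), uIcc_of_le hax.le]
  exact Icc_subset_Icc_right (by linarith [hε.1])

end FinitePartValues

section Holder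

variable {g : ℝ → ℝ} {a b x C α : ℝ}

theorem abs_div_le_mul_rpow_sub_one {y r : ℝ} (hr : 0 < r) (h : |y| ≤ C * r ^ α) :
    |y / r| ≤ C * r ^ (α - 1) := by
  rw [abs_div, abs_of_pos hr, Real.rpow_sub_one hr.ne', ← mul_div_assoc]
  gcongr

theorem hasPF1Lower_pf1Lower_of_holder (hα : 0 < α) (hax : a < x)
    (hg : ContinuousOn g (Icc a x)) (hH : ∀ t ∈ Icc a x, |g t - g x| ≤ C * (x - t) ^ α) :
    HasPF1Lower g a x (pf1Lower g a x) := by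
  refine hasPF1Lower_pf1Lower hax
    ((intervalIntegrable_iff_integrableOn_Ioo_of_le hax.le).2 ?_)
  have hbound : IntegrableOn (fun t => C * (x - t) ^ (α - 1)) (Ioo a x) := by
    have h := (intervalIntegral.intervalIntegrable_rpow' (a := x - a) (b := 0)
      (r := α - 1) (by linarith)).comp_sub_left x
    simp only [sub_sub_cancel, sub_zero] at h
    exact (intervalIntegrable_iff_integrableOn_Ioo_of_le hax.le).1 (h.const_mul C)
  have hcont : ContinuousOn (fun t => (g t - g x) / (x - t)) (Ioo a x) :=
    ((hg.mono Ioo_subset_Icc_self).sub continuousOn_const).div (by fun_prop)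
      fun t ht => (sub_pos.2 ht.2).ne'
  exact hbound.mono' (hcont.aestronglyMeasurable measurableSet_Ioo)
    (ae_restrict_of_forall_mem measurableSet_Ioo fun t ht =>
      abs_div_le_mul_rpow_sub_one (sub_pos.2 ht.2) (hH t (Ioo_subset_Icc_self ht)))

theorem hasPF1Upper_pf1Upper_of_holder (hα : 0 < α) (hxb : x < b)
    (hg : ContinuousOn g (Icc x b)) (hH : ∀ t ∈ Icc x b, |g t - g x| ≤ C * (t - x) ^ α) :
    HasPF1Upper g x b (pf1Upper g x b) := by
  have hmem {t : ℝ} (ht : t ∈ Icc (-b) (-x)) : -t ∈ Icc x b :=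
    ⟨le_neg_of_le_neg ht.2, neg_le_of_neg_le ht.1⟩
  rw [hasPF1Upper_iff_hasPF1Lower_comp_neg, pf1Upper_eq_pf1Lower_comp_neg]
  refine hasPF1Lower_pf1Lower_of_holder hα (neg_lt_neg hxb)
    (hg.comp continuousOn_neg fun t ht => hmem ht) (C := C) fun t ht => ?_
  simpa only [neg_neg, neg_sub_comm] using hH (-t) (hmem ht)

theorem integrableOn_openTriangle_div_sub_of_holder {φ : ℝ × ℝ → ℝ} (hα : 0 < α)
    (hφ : ContinuousOn φ (openTriangle a b))
    (hH : ∀ p ∈ openTriangle a b, |φ p| ≤ C * (p.1 - p.2) ^ α) :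
    IntegrableOn (fun p => φ p / (p.1 - p.2)) (openTriangle a b) := by
  have hbound : IntegrableOn (fun r : ℝ => C * r ^ (α - 1)) (Ioo 0 (b - a)) :=
    ((intervalIntegral.intervalIntegrable_rpow' (by linarith)).const_mul C).1.mono_set
      Ioo_subset_Ioc_self
  have hcont : ContinuousOn (fun p => φ p / (p.1 - p.2)) (openTriangle a b) :=
    hφ.div (by fun_prop) fun p hp => (sub_pos.2 hp.2.1).ne'
  exact (integrableOn_openTriangle_comp_sub hbound).mono'
    (hcont.aestronglyMeasurable measurableSet_openTriangle)
    (ae_restrict_of_forall_mem measurableSet_openTriangle fun p hp =>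
      abs_div_le_mul_rpow_sub_one (sub_pos.2 hp.2.1) (hH p hp))

end Holder

section IntegrationByParts

variable {φ ψ : ℝ → ℝ} {b c d x L : ℝ}

theorem tendsto_slope_add_nhdsGT_zero (hφ : HasDerivWithinAt φ d (Ici x) x) :
    Tendsto (fun ε => (φ (x + ε) - φ x) / ε) (𝓝[>] 0) (𝓝 d) := by
  have hshift : Tendsto (fun ε => x + ε) (𝓝[>] 0) (𝓝[>] x) :=
    tendsto_nhdsWithin_iff.2
      ⟨(Continuous.tendsto' (by fun_prop) 0 x (add_zero x)).mono_left nhdsWithin_le_nhds,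
        eventually_mem_nhdsWithin.mono fun ε hε => lt_add_of_pos_right x hε⟩
  have hslope := (hasDerivWithinAt_iff_tendsto_slope' self_notMem_Ioi).1 hφ.Ioi_of_Ici
  simpa only [Function.comp_def, slope_def_field, add_sub_cancel_left] using hslope.comp hshift

theorem integral_div_sub_sq_eq (hxc : x < c) (hcb : c ≤ b)
    (hφ : ∀ s ∈ Icc c b, HasDerivWithinAt φ (ψ s) (Icc c b) s) (hψ : ContinuousOn ψ (Icc c b)) :
    ∫ s in c..b, φ s / (s - x) ^ 2 =
      (∫ s in c..b, ψ s / (s - x)) - φ b / (b - x) + φ c / (c - x) := by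
  rw [← uIcc_of_le hcb] at hφ hψ
  have hne : ∀ s ∈ uIcc c b, s - x ≠ 0 := fun s hs => by
    rw [uIcc_of_le hcb] at hs
    linarith [hs.1]
  have hinv : ∀ s ∈ uIcc c b,
      HasDerivWithinAt (fun s => -(s - x)⁻¹) ((s - x) ^ 2)⁻¹ (uIcc c b) s := fun s hs => by
    simpa only [neg_neg, neg_div, one_div] using
      (((hasDerivAt_id' s).sub_const x).fun_inv (hne s hs)).fun_neg.hasDerivWithinAt
  have hparts := intervalIntegral.integral_mul_deriv_eq_deriv_mul_of_hasDerivWithinAt hφ hinv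
    hψ.intervalIntegrable (ContinuousOn.inv₀ (by fun_prop) fun s hs =>
      pow_ne_zero 2 (hne s hs)).intervalIntegrable
  simp only [mul_neg, intervalIntegral.integral_neg, ← div_eq_mul_inv] at hparts
  rw [hparts]
  ring

theorem HasPF1Upper.hasPF2Upper (hψL : HasPF1Upper ψ x b L) (hxb : x < b)
    (hφ : ∀ s ∈ Icc x b, HasDerivWithinAt φ (ψ s) (Icc x b) s) (hψ : ContinuousOn ψ (Icc x b)) :
    HasPF2Upper φ (ψ x) x b (L + ψ x - φ b / (b - x)) := by
  have hslope := tendsto_slope_add_nhdsGT_zero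
    ((hφ x (left_mem_Icc.2 hxb.le)).mono_of_mem_nhdsWithin (Icc_mem_nhdsGE hxb))
  refine ((hψL.add hslope).sub_const (φ b / (b - x))).congr' ?_
  filter_upwards [Ioo_mem_nhdsGT (sub_pos.2 hxb)] with ε hε
  have hsub : Icc (x + ε) b ⊆ Icc x b := Icc_subset_Icc_left (by linarith [hε.1])
  rw [integral_div_sub_sq_eq (lt_add_of_pos_right x hε.1) (by linarith [hε.2])
    (fun s hs => (hφ s (hsub hs)).mono hsub) (hψ.mono hsub), add_sub_cancel_left]
  ring

end IntegrationByParts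

section Exchange

variable {a b : ℝ} {H : ℝ → ℝ → ℝ}

theorem intervalIntegrable_pf1Lower (hab : a ≤ b)
    (hD : ContinuousOn (fun s => H s s) (Icc a b))
    (hH : IntegrableOn (fun p => (H p.1 p.2 - H p.1 p.1) / (p.1 - p.2)) (openTriangle a b)) :
    IntervalIntegrable (fun s => pf1Lower (H s) a s) volume a b :=
  (intervalIntegrable_integral_openTriangle_fst hab hH).add
    ((intervalIntegrable_log_sub_left a b a).continuousOn_mul (uIcc_of_le hab ▸ hD))

theorem intervalIntegrable_pf1Upper (hab : a ≤ b)
    (hD : ContinuousOn (fun t => H t t) (Icc a b))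
    (hH : IntegrableOn (fun p => (H p.1 p.2 - H p.2 p.2) / (p.1 - p.2)) (openTriangle a b)) :
    IntervalIntegrable (fun t => pf1Upper (fun s => H s t) t b) volume a b :=
  (intervalIntegrable_integral_openTriangle_snd hab hH).add
    ((intervalIntegrable_log_sub_right a b b).continuousOn_mul (uIcc_of_le hab ▸ hD))

theorem integral_pf1Upper_eq_integral_pf1Lower (hab : a ≤ b)
    (hD : ContinuousOn (fun t => H t t) (Icc a b))
    (hfst : IntegrableOn (fun p => (H p.1 p.2 - H p.2 p.2) / (p.1 - p.2)) (openTriangle a b))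
    (hsnd : IntegrableOn (fun p => (H p.1 p.2 - H p.1 p.1) / (p.1 - p.2)) (openTriangle a b)) :
    ∫ t in a..b, pf1Upper (fun s => H s t) t b = ∫ s in a..b, pf1Lower (H s) a s := by
  have hsub (p : ℝ × ℝ) : (H p.1 p.2 - H p.2 p.2) / (p.1 - p.2) -
      (H p.1 p.2 - H p.1 p.1) / (p.1 - p.2) = (H p.1 p.1 - H p.2 p.2) / (p.1 - p.2) := by
    rw [← sub_div, sub_sub_sub_cancel_left]
  have hslope := setIntegral_openTriangle_slope hab hD
    ((hfst.sub hsnd).congr (Eventually.of_forall hsub))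
  simp only [← hsub] at hslope
  rw [integral_sub hfst hsnd, setIntegral_openTriangle_eq_integral_snd hab hfst,
    setIntegral_openTriangle_eq_integral_fst hab hsnd] at hslope
  have hD' : ContinuousOn (fun t => H t t) (uIcc a b) := uIcc_of_le hab ▸ hD
  simp only [pf1Upper, pf1Lower]
  rw [intervalIntegral.integral_add (intervalIntegrable_integral_openTriangle_snd hab hfst)
      ((intervalIntegrable_log_sub_right a b b).continuousOn_mul hD'),
    intervalIntegral.integral_add (intervalIntegrable_integral_openTriangle_fst hab hsnd)
      ((intervalIntegrable_log_sub_left a b a).continuousOn_mul hD')]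
  linarith

end Exchange

section DiagonalHolder

variable {a b C α : ℝ} {f f₁ : ℝ → ℝ → ℝ}

theorem hasPF2Upper_of_diagonal_holder (hα : 0 < α)
    (hf₁ : ContinuousOn (fun p : ℝ × ℝ => f₁ p.1 p.2) (Icc a b ×ˢ Icc a b))
    (hderiv : ∀ t ∈ Icc a b, ∀ s ∈ Icc a b,
      HasDerivWithinAt (fun s => f s t) (f₁ s t) (Icc a b) s)
    (hfst : ∀ s ∈ Icc a b, ∀ t ∈ Icc a b, |f₁ s t - f₁ t t| ≤ C * |s - t| ^ α)
    {t : ℝ} (ht : t ∈ Ico a b) :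
    HasPF2Upper (fun s => f s t) (f₁ t t) t b
      (pf1Upper (fun s => f₁ s t) t b + f₁ t t - f b t / (b - t)) := by
  have ht' : t ∈ Icc a b := Ico_subset_Icc_self ht
  have hsub : Icc t b ⊆ Icc a b := Icc_subset_Icc_left ht.1
  have hcont : ContinuousOn (fun s => f₁ s t) (Icc t b) :=
    hf₁.comp (f := fun s => (s, t)) (by fun_prop) fun s hs => ⟨hsub hs, ht'⟩
  have hupper : HasPF1Upper (fun s => f₁ s t) t b (pf1Upper (fun s => f₁ s t) t b) :=
    hasPF1Upper_pf1Upper_of_holder hα ht.2 hcont fun s hs => by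
      simpa only [abs_of_nonneg (sub_nonneg.2 hs.1)] using hfst s (hsub hs) t ht'
  exact hupper.hasPF2Upper ht.2 (fun s hs => (hderiv t ht' s (hsub hs)).mono hsub) hcont

theorem hasPF1Lower_of_diagonal_holder (hα : 0 < α)
    (hf₁ : ContinuousOn (fun p : ℝ × ℝ => f₁ p.1 p.2) (Icc a b ×ˢ Icc a b))
    (hsnd : ∀ s ∈ Icc a b, ∀ t ∈ Icc a b, |f₁ s t - f₁ s s| ≤ C * |s - t| ^ α)
    {s : ℝ} (hs : s ∈ Ioc a b) :
    HasPF1Lower (f₁ s) a s (pf1Lower (f₁ s) a s) := by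
  have hs' : s ∈ Icc a b := Ioc_subset_Icc_self hs
  have hsub : Icc a s ⊆ Icc a b := Icc_subset_Icc_right hs.2
  refine hasPF1Lower_pf1Lower_of_holder (C := C) hα hs.1
    (hf₁.comp (f := fun t => (s, t)) (by fun_prop) fun t ht => ⟨hs', hsub ht⟩) fun t ht => ?_
  simpa only [abs_of_nonneg (sub_nonneg.2 ht.2)] using hsnd s hs' t (hsub ht)

theorem integrableOn_openTriangle_fst_diagonal (hα : 0 < α)
    (hf₁ : ContinuousOn (fun p : ℝ × ℝ => f₁ p.1 p.2) (Icc a b ×ˢ Icc a b))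
    (hfst : ∀ s ∈ Icc a b, ∀ t ∈ Icc a b, |f₁ s t - f₁ t t| ≤ C * |s - t| ^ α) :
    IntegrableOn (fun p => (f₁ p.1 p.2 - f₁ p.2 p.2) / (p.1 - p.2)) (openTriangle a b) := by
  have hdiag : ContinuousOn (fun p : ℝ × ℝ => f₁ p.2 p.2) (Icc a b ×ˢ Icc a b) :=
    hf₁.comp (f := fun p : ℝ × ℝ => (p.2, p.2)) (by fun_prop) fun p hp => ⟨hp.2, hp.2⟩
  refine integrableOn_openTriangle_div_sub_of_holder (C := C) hα
    ((hf₁.sub hdiag).mono openTriangle_subset_Icc_prod_Icc) fun p hp => ?_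
  obtain ⟨hs, ht⟩ := openTriangle_subset_Icc_prod_Icc hp
  simpa only [abs_of_pos (sub_pos.2 hp.2.1)] using hfst _ hs _ ht

theorem integrableOn_openTriangle_snd_diagonal (hα : 0 < α)
    (hf₁ : ContinuousOn (fun p : ℝ × ℝ => f₁ p.1 p.2) (Icc a b ×ˢ Icc a b))
    (hsnd : ∀ s ∈ Icc a b, ∀ t ∈ Icc a b, |f₁ s t - f₁ s s| ≤ C * |s - t| ^ α) :
    IntegrableOn (fun p => (f₁ p.1 p.2 - f₁ p.1 p.1) / (p.1 - p.2)) (openTriangle a b) := by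
  have hdiag : ContinuousOn (fun p : ℝ × ℝ => f₁ p.1 p.1) (Icc a b ×ˢ Icc a b) :=
    hf₁.comp (f := fun p : ℝ × ℝ => (p.1, p.1)) (by fun_prop) fun p hp => ⟨hp.1, hp.1⟩
  refine integrableOn_openTriangle_div_sub_of_holder (C := C) hα
    ((hf₁.sub hdiag).mono openTriangle_subset_Icc_prod_Icc) fun p hp => ?_
  obtain ⟨hs, ht⟩ := openTriangle_subset_Icc_prod_Icc hp
  simpa only [abs_of_pos (sub_pos.2 hp.2.1)] using hsnd _ hs _ ht

theorem stmt6_general (hab : a ≤ b) (hα : 0 < α)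
    (hf₁ : ContinuousOn (fun p : ℝ × ℝ => f₁ p.1 p.2) (Icc a b ×ˢ Icc a b))
    (hderiv : ∀ t ∈ Icc a b, ∀ s ∈ Icc a b,
      HasDerivWithinAt (fun s => f s t) (f₁ s t) (Icc a b) s)
    (hfst : ∀ s ∈ Icc a b, ∀ t ∈ Icc a b, |f₁ s t - f₁ t t| ≤ C * |s - t| ^ α)
    (hsnd : ∀ s ∈ Icc a b, ∀ t ∈ Icc a b, |f₁ s t - f₁ s s| ≤ C * |s - t| ^ α)
    (hint : IntegrableOn (fun t => f b t / (b - t)) (Icc a b)) :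
    ∃ g₁ g₂ : ℝ → ℝ,
      (∀ t ∈ Ico a b, HasPF2Upper (fun s => f s t) (f₁ t t) t b (g₁ t)) ∧
      (∀ s ∈ Ioc a b, HasPF1Lower (f₁ s) a s (g₂ s)) ∧
      IntegrableOn g₁ (Icc a b) ∧ IntegrableOn g₂ (Icc a b) ∧
      ∫ t in Icc a b, g₁ t =
        (∫ s in Icc a b, g₂ s) + (∫ t in Icc a b, f₁ t t) - ∫ t in Icc a b, f b t / (b - t) := by
  have hD : ContinuousOn (fun t => f₁ t t) (Icc a b) :=
    hf₁.comp (f := fun t => (t, t)) (by fun_prop) fun t ht => ⟨ht, ht⟩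
  have hquot_fst := integrableOn_openTriangle_fst_diagonal hα hf₁ hfst
  have hquot_snd := integrableOn_openTriangle_snd_diagonal hα hf₁ hsnd
  have hdiag : IntegrableOn (fun t => f₁ t t) (Icc a b) := hD.integrableOn_Icc
  have hupper := (intervalIntegrable_iff_integrableOn_Icc_of_le hab).1
    (intervalIntegrable_pf1Upper hab hD hquot_fst)
  have hlower := (intervalIntegrable_iff_integrableOn_Icc_of_le hab).1
    (intervalIntegrable_pf1Lower hab hD hquot_snd)
  have hsum : IntegrableOn (fun t => pf1Upper (fun s => f₁ s t) t b + f₁ t t) (Icc a b) :=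
    hupper.add hdiag
  refine ⟨fun t => pf1Upper (fun s => f₁ s t) t b + f₁ t t - f b t / (b - t),
    fun s => pf1Lower (f₁ s) a s,
    fun t ht => hasPF2Upper_of_diagonal_holder hα hf₁ hderiv hfst ht,
    fun s hs => hasPF1Lower_of_diagonal_holder hα hf₁ hsnd hs,
    hsum.sub hint, hlower, ?_⟩
  have hswap := integral_pf1Upper_eq_integral_pf1Lower hab hD hquot_fst hquot_snd
  rw [intervalIntegral.integral_of_le hab, intervalIntegral.integral_of_le hab,
    ← integral_Icc_eq_integral_Ioc, ← integral_Icc_eq_integral_Ioc] at hswap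
  beta_reduce
  rw [integral_sub hsum hint, integral_add hupper hdiag, hswap]

end DiagonalHolder

/-- for `f ∈ C(Ḡ, C^{1+α}(I²))` (partials `f₁ = ∂f/∂E'`, `f₂ = ∂f/∂E`,
both `α`-Hölder uniformly in `x`), assuming `E' ↦ f(x,E_m,E')/(E_m−E')` integrable on `I`:
`∫_I ( p.f.∫_E^{E_m} f(x,E',E)/(E'−E)² dE' ) dE
 = ∫_I ( p.f.∫_{E₀}^{E'} (∂f/∂E')(x,E',E)/(E'−E) dE ) dE'
   + ∫_I (∂f/∂E')(x,E',E') dE' − ∫_I f(x,E_m,E')/(E_m−E') dE'`. -/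
theorem stmt6 (G : Set E3) (hGopen : IsOpen G) (hGbdd : Bornology.IsBounded G)
    (E₀ Em α : ℝ) (hE₀ : 0 ≤ E₀) (hI : E₀ < Em) (hα : 0 < α)
    (f f₁ f₂ : E3 → ℝ → ℝ → ℝ) (C : ℝ)
    (hf : ContinuousOn (fun p : E3 × ℝ × ℝ => f p.1 p.2.1 p.2.2)
      (closure G ×ˢ Set.Icc E₀ Em ×ˢ Set.Icc E₀ Em))
    (hf₁ : ContinuousOn (fun p : E3 × ℝ × ℝ => f₁ p.1 p.2.1 p.2.2)
      (closure G ×ˢ Set.Icc E₀ Em ×ˢ Set.Icc E₀ Em))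
    (hf₂ : ContinuousOn (fun p : E3 × ℝ × ℝ => f₂ p.1 p.2.1 p.2.2)
      (closure G ×ˢ Set.Icc E₀ Em ×ˢ Set.Icc E₀ Em))
    (hderiv₁ : ∀ x ∈ closure G, ∀ E ∈ Set.Icc E₀ Em, ∀ E' ∈ Set.Icc E₀ Em,
      HasDerivWithinAt (fun s => f x s E) (f₁ x E' E) (Set.Icc E₀ Em) E')
    (hderiv₂ : ∀ x ∈ closure G, ∀ E' ∈ Set.Icc E₀ Em, ∀ E ∈ Set.Icc E₀ Em,
      HasDerivWithinAt (fun t => f x E' t) (f₂ x E' E) (Set.Icc E₀ Em) E)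
    (hHolder₁ : ∀ x ∈ closure G, ∀ E₁' ∈ Set.Icc E₀ Em, ∀ E₁ ∈ Set.Icc E₀ Em,
      ∀ E₂' ∈ Set.Icc E₀ Em, ∀ E₂ ∈ Set.Icc E₀ Em,
      |f₁ x E₁' E₁ - f₁ x E₂' E₂| ≤ C * (|E₁' - E₂'| ^ α + |E₁ - E₂| ^ α))
    (hHolder₂ : ∀ x ∈ closure G, ∀ E₁' ∈ Set.Icc E₀ Em, ∀ E₁ ∈ Set.Icc E₀ Em,
      ∀ E₂' ∈ Set.Icc E₀ Em, ∀ E₂ ∈ Set.Icc E₀ Em,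
      |f₂ x E₁' E₁ - f₂ x E₂' E₂| ≤ C * (|E₁' - E₂'| ^ α + |E₁ - E₂| ^ α))
    (hint : ∀ x ∈ closure G,
      IntegrableOn (fun E' => f x Em E' / (Em - E')) (Set.Icc E₀ Em)) :
    ∀ x ∈ closure G, ∃ g₁ g₂ : ℝ → ℝ,
      (∀ E ∈ Set.Ico E₀ Em,
        HasPF2Upper (fun E' => f x E' E) (f₁ x E E) E Em (g₁ E)) ∧
      (∀ E' ∈ Set.Ioc E₀ Em,
        HasPF1Lower (fun E => f₁ x E' E) E₀ E' (g₂ E')) ∧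
      IntegrableOn g₁ (Set.Icc E₀ Em) ∧ IntegrableOn g₂ (Set.Icc E₀ Em) ∧
      ∫ E in Set.Icc E₀ Em, g₁ E
        = (∫ E' in Set.Icc E₀ Em, g₂ E') + (∫ E' in Set.Icc E₀ Em, f₁ x E' E')
          - ∫ E' in Set.Icc E₀ Em, f x Em E' / (Em - E') := by
  intro x hx
  refine stmt6_general (C := C) hI.le hα
    (hf₁.comp (f := fun p : ℝ × ℝ => (x, p)) (by fun_prop) fun p hp => ⟨hx, hp⟩) (hderiv₁ x hx)
    (fun s hs t ht => ?_) (fun s hs t ht => ?_) (hint x hx)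
  · simpa [hα.ne'] using hHolder₁ x hx s hs t ht t ht t ht
  · simpa [hα.ne', abs_sub_comm s t] using hHolder₁ x hx s hs t ht s hs s hs
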